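/- arXiv:2209.07346 — 2 statements merged into one kernel-verified Lean document; each statement's English description precedes it below -/
import Mathlib

section
/- Let A be a commutative group and let a, b, c, d, e, f ∈ A satisfy a·b·c = 1 and d·e·f = 1. If the multisets {a, b, c, a⁻¹, b⁻¹, c⁻¹} and {d, e, f, d⁻¹, e⁻¹, f⁻¹} are equal, then the multisets {a, b, c} and {d, e, f} are equal, or the multisets {a, b, c} and {d⁻¹, e⁻¹, f⁻¹} are equal. -/
theorem aux_core {A : Type*} [CommGroup A]
    (a b c d e f : A) (habc : a * b * c = 1) (hdef : d * e * f = 1)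
    (h1 : a = d ∨ a = d⁻¹) (h2 : b = e ∨ b = e⁻¹) (h3 : c = f ∨ c = f⁻¹) :
    ({a, b, c} : Multiset A) = ({d, e, f} : Multiset A) ∨
      ({a, b, c} : Multiset A) = ({d⁻¹, e⁻¹, f⁻¹} : Multiset A) := by
  have hi : d⁻¹ * e⁻¹ * f⁻¹ = 1 := by
    rw [← mul_inv, ← mul_inv, hdef, inv_one]
  have key : ∀ x y z x' y' z' : A, x * y * z = 1 → x' * y' * z' = 1 →
      (x = x' ∧ y = y') ∨ (x = x' ∧ z = z') ∨ (y = y' ∧ z = z') →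
      ({x, y, z} : Multiset A) = {x', y', z'} := by
    rintro x y z x' y' z' h h' (⟨rfl, rfl⟩ | ⟨rfl, rfl⟩ | ⟨rfl, rfl⟩)
    · rw [mul_left_cancel (h.trans h'.symm)]
    · rw [mul_left_cancel (mul_right_cancel (h.trans h'.symm))]
    · rw [mul_right_cancel (mul_right_cancel (h.trans h'.symm))]
  have k1 := key a b c d e f habc hdef
  have k2 := key a b c _ _ _ habc hi
  tauto

theorem aux_peel {A : Type*} [CommGroup A] (a d : A) (S T : Multiset A)
    (h : a ::ₘ a⁻¹ ::ₘ S = d ::ₘ d⁻¹ ::ₘ T) (h1 : a = d ∨ a = d⁻¹) : S = T := by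
  rcases h1 with rfl | rfl
  · simpa using h
  · rw [inv_inv, Multiset.cons_swap] at h
    simpa using h

theorem aux_two {A : Type*} [CommGroup A] (b c e f : A)
    (h : b ::ₘ b⁻¹ ::ₘ c ::ₘ {c⁻¹} = e ::ₘ e⁻¹ ::ₘ f ::ₘ {f⁻¹})
    (h1 : b = e ∨ b = e⁻¹) : c = f ∨ c = f⁻¹ := by
  have h2 := aux_peel _ _ _ _ h h1
  have : c ∈ f ::ₘ {f⁻¹} := by rw [← h2]; simp
  simpa using this

theorem aux_swap {A : Type*} (x x' y y' : A) (S : Multiset A) :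
    x ::ₘ x' ::ₘ y ::ₘ y' ::ₘ S = y ::ₘ y' ::ₘ x ::ₘ x' ::ₘ S := by
  simp only [← Multiset.singleton_add]; abel

theorem aux_three {A : Type*} [CommGroup A]
    (a b c d e f : A) (habc : a * b * c = 1) (hdef : d * e * f = 1)
    (h : a ::ₘ a⁻¹ ::ₘ b ::ₘ b⁻¹ ::ₘ c ::ₘ {c⁻¹} = d ::ₘ d⁻¹ ::ₘ e ::ₘ e⁻¹ ::ₘ f ::ₘ {f⁻¹})
    (h1 : a = d ∨ a = d⁻¹) :
    ({a, b, c} : Multiset A) = ({d, e, f} : Multiset A) ∨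
      ({a, b, c} : Multiset A) = ({d⁻¹, e⁻¹, f⁻¹} : Multiset A) := by
  have h2 := aux_peel _ _ _ _ h h1
  have hb : b ∈ e ::ₘ e⁻¹ ::ₘ f ::ₘ {f⁻¹} := by rw [← h2]; simp
  have hb : (b = e ∨ b = e⁻¹) ∨ (b = f ∨ b = f⁻¹) := by
    simp at hb; tauto
  rcases hb with hb | hb
  · exact aux_core a b c d e f habc hdef h1 hb (aux_two _ _ _ _ h2 hb)
  · have h3 : b ::ₘ b⁻¹ ::ₘ c ::ₘ {c⁻¹} = f ::ₘ f⁻¹ ::ₘ e ::ₘ {e⁻¹} := by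
      rw [h2]; exact aux_swap _ _ _ _ 0
    have := aux_core a b c d f e habc (by rw [← hdef, mul_right_comm]) h1 hb
      (aux_two _ _ _ _ h3 hb)
    simpa only [Multiset.insert_eq_cons, Multiset.pair_comm f e,
      Multiset.pair_comm f⁻¹ e⁻¹] using this

/-- **Three one-dimensional summands case of Lemma 2.2(i).**
Let `A` be a commutative group and `a b c d e f : A` with `a*b*c = 1` and `d*e*f = 1`.
If the multisets `{a, b, c, a⁻¹, b⁻¹, c⁻¹}` and `{d, e, f, d⁻¹, e⁻¹, f⁻¹}` coincide, then
`{a, b, c} = {d, e, f}` or `{a, b, c} = {d⁻¹, e⁻¹, f⁻¹}` as multisets. -/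
theorem multiset_eq_or_eq_inv_of_selfDualUnion_eq {A : Type*} [CommGroup A]
    (a b c d e f : A) (habc : a * b * c = 1) (hdef : d * e * f = 1)
    (h : ({a, b, c, a⁻¹, b⁻¹, c⁻¹} : Multiset A) = ({d, e, f, d⁻¹, e⁻¹, f⁻¹} : Multiset A)) :
    ({a, b, c} : Multiset A) = ({d, e, f} : Multiset A) ∨
      ({a, b, c} : Multiset A) = ({d⁻¹, e⁻¹, f⁻¹} : Multiset A) := by
  have r : ∀ x y z : A, ({x, y, z, x⁻¹, y⁻¹, z⁻¹} : Multiset A)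
      = x ::ₘ x⁻¹ ::ₘ y ::ₘ y⁻¹ ::ₘ z ::ₘ {z⁻¹} := by
    intro x y z
    simp only [Multiset.insert_eq_cons, ← Multiset.singleton_add]; abel
  have rot : ∀ x y z : A, ({x, y, z} : Multiset A) = {y, z, x} := by
    intro x y z
    simp only [Multiset.insert_eq_cons, ← Multiset.singleton_add]; abel
  have rot6 : ∀ x y z : A, ({x, y, z, x⁻¹, y⁻¹, z⁻¹} : Multiset A)
      = {y, z, x, y⁻¹, z⁻¹, x⁻¹} := by
    intro x y z
    simp only [Multiset.insert_eq_cons, ← Multiset.singleton_add]; abel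
  have ha : a ∈ ({d, e, f, d⁻¹, e⁻¹, f⁻¹} : Multiset A) := by rw [← h]; simp
  have ha : (a = d ∨ a = d⁻¹) ∨ (a = e ∨ a = e⁻¹) ∨ (a = f ∨ a = f⁻¹) := by
    simp at ha; tauto
  have hd2 : e * f * d = 1 := by rw [← hdef, mul_comm, mul_assoc]
  have hd3 : f * d * e = 1 := by rw [← hd2, mul_comm, mul_assoc]
  rcases ha with ha | ha | ha
  · exact aux_three a b c d e f habc hdef (by rw [← r, ← r, h]) ha
  · rw [rot d, rot d⁻¹]
    exact aux_three a b c e f d habc hd2 (by rw [← r, ← r, h, rot6]) ha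
  · rw [rot d, rot d⁻¹, rot e, rot e⁻¹]
    exact aux_three a b c f d e habc hd3 (by rw [← r, ← r, h, rot6, rot6]) ha
end

section
/- Let SU(3) denote the special unitary group of 3 × 3 complex matrices and let ι : SU(2) → SU(3) be the embedding sending A ∈ SU(2) to the block-diagonal matrix with blocks A and 1. Then every continuous irreducible finite-dimensional complex representation π of SU(3) has a nonzero vector fixed by π(ι(A)) for every A ∈ SU(2); that is, the subspace of ι(SU(2))-invariant vectors is nonzero. -/
open Module

/-- The block-diagonal embedding of `2 × 2` matrices into `3 × 3` matrices,
`A ↦ diag(A, 1)`. -/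
def blockEmbed (A : Matrix (Fin 2) (Fin 2) ℂ) : Matrix (Fin 3) (Fin 3) ℂ :=
  Matrix.reindex finSumFinEquiv finSumFinEquiv
    (Matrix.fromBlocks A 0 0 (1 : Matrix (Fin 1) (Fin 1) ℂ))


/-- polarization -/
theorem polar_aux (P : MvPolynomial (Fin 3 ⊕ Fin 3) ℂ)
    (h : ∀ x : Fin 3 → ℂ, MvPolynomial.eval (Sum.elim x (fun i => star (x i))) P = 0) : P = 0 := by
  have h1 : (MvPolynomial.bind₁ (fun s : Fin 3 ⊕ Fin 3 => (Sum.elim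
      (fun i => MvPolynomial.X (Sum.inl i) + MvPolynomial.C Complex.I * MvPolynomial.X (Sum.inr i))
      (fun i => MvPolynomial.X (Sum.inl i) - MvPolynomial.C Complex.I * MvPolynomial.X (Sum.inr i)) s
      : MvPolynomial (Fin 3 ⊕ Fin 3) ℂ))) P = 0 := by
    apply MvPolynomial.funext_set (fun _ => Set.range (fun r : ℝ => (r : ℂ)))
    · intro i
      exact Set.infinite_range_of_injective Complex.ofReal_injective
    · intro y hy
      have hy' : ∀ i, star (y i) = y i := by
        intro i
        obtain ⟨r, hr⟩ := hy i trivial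
        rw [← hr]
        exact Complex.conj_ofReal r
      have := h (fun i => y (Sum.inl i) + Complex.I * y (Sum.inr i))
      rw [map_zero, ← this, MvPolynomial.eval, MvPolynomial.eval₂Hom_bind₁]
      congr 2
      funext s
      rcases s with s | s
      · simp
      · simp only [Sum.elim_inr, map_sub, map_mul, MvPolynomial.eval₂Hom_X', MvPolynomial.eval₂Hom_C,
          star_add, star_mul', hy', RingHom.id_apply]
        simp [sub_eq_add_neg]
  apply MvPolynomial.funext
  intro z
  have h2 := congrArg (MvPolynomial.eval (Sum.elim
    (fun i => (z (Sum.inl i) + z (Sum.inr i)) / 2)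
    (fun i => (z (Sum.inl i) - z (Sum.inr i)) / (2 * Complex.I)))) h1
  rw [map_zero, MvPolynomial.eval, MvPolynomial.eval₂Hom_bind₁] at h2
  rw [map_zero, ← h2, MvPolynomial.eval]
  congr 2
  funext s
  rcases s with s | s <;> simp <;> field_simp <;> ring

theorem exists_perm_aux {p : ℕ} (j j' : Fin p → Fin 3)
    (h : ∀ c, (Finset.univ.filter (fun s => j s = c)).card = (Finset.univ.filter (fun s => j' s = c)).card) :
    ∃ σ : Equiv.Perm (Fin p), j = j' ∘ σ := by
  have e0 : ∀ c, Nonempty ({s // j s = c} ≃ {s // j' s = c}) := by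
    intro c
    rw [← Fintype.card_eq, Fintype.card_subtype, Fintype.card_subtype]
    exact h c
  have e := fun c => Classical.choice (e0 c)
  refine ⟨(Equiv.sigmaFiberEquiv j).symm.trans ((Equiv.sigmaCongrRight e).trans (Equiv.sigmaFiberEquiv j')), ?_⟩
  funext s
  simp only [Function.comp_apply, Equiv.trans_apply, Equiv.sigmaFiberEquiv, Equiv.coe_fn_symm_mk,
    Equiv.sigmaCongrRight_apply, Equiv.coe_fn_mk]
  exact ((e (j s) ⟨s, rfl⟩).2).symm

theorem polar {p q : ℕ} (B : (Fin p → Fin 3) → (Fin q → Fin 3) → ℂ)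
    (hs1 : ∀ (σ : Equiv.Perm (Fin p)) j l, B (j ∘ σ) l = B j l)
    (hs2 : ∀ (σ : Equiv.Perm (Fin q)) j l, B j (l ∘ σ) = B j l)
    (h : ∀ x : Fin 3 → ℂ, ∑ j, ∑ l, ((∏ s, x (j s)) * ∏ t, star (x (l t))) * B j l = 0)
    (j l) : B j l = 0 := by
  let E : (Fin p → Fin 3) → (Fin q → Fin 3) → (Fin 3 ⊕ Fin 3 →₀ ℕ) := fun j l =>
    ∑ s, Finsupp.single (Sum.inl (j s)) 1 + ∑ t, Finsupp.single (Sum.inr (l t)) 1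
  have hP : (∑ j, ∑ l, MvPolynomial.monomial (E j l) (B j l)) = 0 := by
    apply polar_aux
    intro x
    rw [← h x]
    simp only [map_sum]
    refine Finset.sum_congr rfl fun j _ => Finset.sum_congr rfl fun l _ => ?_
    have : MvPolynomial.monomial (E j l) (B j l) = MvPolynomial.C (B j l) *
        ((∏ s, MvPolynomial.X (Sum.inl (j s))) * ∏ t, MvPolynomial.X (Sum.inr (l t))) := by
      simp only [E, MvPolynomial.X]
      rw [← MvPolynomial.monomial_sum_one, ← MvPolynomial.monomial_sum_one, MvPolynomial.monomial_mul,
        MvPolynomial.C_mul_monomial]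
      simp
    rw [this]
    simp [map_prod, mul_comm]
  have hc := congrArg (MvPolynomial.coeff (E j l)) hP
  simp only [MvPolynomial.coeff_sum, MvPolynomial.coeff_monomial, MvPolynomial.coeff_zero] at hc
  have key : ∀ j' l', (if E j' l' = E j l then B j' l' else 0) = (if E j' l' = E j l then 1 else 0) * B j l := by
    intro j' l'
    split_ifs with hE
    · rw [one_mul]
      obtain ⟨σ, hσ⟩ := exists_perm_aux j' j (by
        intro c
        have := DFunLike.congr_fun hE (Sum.inl c)
        simpa [E, Finsupp.single_apply, Finset.sum_boole] using this)
      obtain ⟨ρ, hρ⟩ := exists_perm_aux l' l (by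
        intro c
        have := DFunLike.congr_fun hE (Sum.inr c)
        simpa [E, Finsupp.single_apply, Finset.sum_boole] using this)
      rw [hσ, hρ, hs1, hs2]
    · simp
  simp only [key, ← Finset.sum_mul] at hc
  rcases mul_eq_zero.1 hc with h0 | h0
  · exfalso
    have h1 : (∑ j', ∑ l', (if E j' l' = E j l then 1 else 0) : ℕ) = 0 := by exact_mod_cast h0
    simp only [Finset.sum_eq_zero_iff, Finset.mem_univ, true_implies] at h1
    have := h1 j l
    simp at this
  · exact h0

abbrev SU (n : ℕ) := Matrix.specialUnitaryGroup (Fin n) ℂ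

/-- coordinate function -/
noncomputable def cg (i j : Fin 3) : C(SU 3, ℂ) :=
  ⟨fun g => (g : Matrix (Fin 3) (Fin 3) ℂ) i j,
    (continuous_apply j).comp ((continuous_apply i).comp continuous_subtype_val)⟩

theorem su_adj (g : SU 3) : star (g : Matrix (Fin 3) (Fin 3) ℂ) = Matrix.adjugate g := by
  have h := g.2
  rw [Matrix.mem_specialUnitaryGroup_iff, Matrix.mem_unitaryGroup_iff'] at h
  have h2 := Matrix.mul_adjugate (g : Matrix (Fin 3) (Fin 3) ℂ)
  rw [h.2, one_smul] at h2
  calc star (g : Matrix (Fin 3) (Fin 3) ℂ) = star (g : Matrix (Fin 3) (Fin 3) ℂ) * (g.1 * Matrix.adjugate g.1) := by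
        rw [h2, mul_one]
    _ = _ := by rw [← mul_assoc, h.1, one_mul]

theorem cg_minor (a b c d : Fin 3) : ∃ (ε : ℂ) (r s : Fin 3),
    cg a c * cg b d - cg a d * cg b c = ε • star (cg r s) := by
  refine ⟨(if a = b then 0 else if b = a + 1 then 1 else -1) *
    (if c = d then 0 else if d = c + 1 then 1 else -1), -(a + b), -(c + d), ?_⟩
  ext g
  have h : star ((g : Matrix (Fin 3) (Fin 3) ℂ) (-(a + b)) (-(c + d))) =
      Matrix.adjugate g.1 (-(c + d)) (-(a + b)) := by
    rw [← su_adj]; rfl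
  have e : (star (cg (-(a + b)) (-(c + d)))) g = star ((g : Matrix (Fin 3) (Fin 3) ℂ) (-(a + b)) (-(c + d))) := rfl
  rw [ContinuousMap.smul_apply, e, h, Matrix.adjugate_fin_three]
  simp only [ContinuousMap.sub_apply, ContinuousMap.mul_apply, cg, ContinuousMap.coe_mk, smul_eq_mul]
  fin_cases a <;> fin_cases b <;> fin_cases c <;> fin_cases d <;> simp [Matrix.of_apply] <;> ring

theorem cg_minor_star (a b c d : Fin 3) : ∃ (ε : ℂ) (r s : Fin 3),
    star (cg a c) * star (cg b d) - star (cg a d) * star (cg b c) = ε • cg r s := by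
  obtain ⟨ε, r, s, h⟩ := cg_minor a b c d
  refine ⟨star ε, r, s, ?_⟩
  have := congrArg star h
  simpa only [star_sub, star_mul', star_smul, star_star] using this

/-- generators -/
noncomputable def gen (x : Bool × Fin 3 × Fin 3) : C(SU 3, ℂ) :=
  if x.1 then star (cg x.2.1 x.2.2) else cg x.2.1 x.2.2

theorem gen_false (i j) : gen (false, i, j) = cg i j := rfl
theorem gen_true (i j) : gen (true, i, j) = star (cg i j) := rfl

theorem gen_minor (β : Bool) (a b c d : Fin 3) : ∃ (ε : ℂ) (r s : Fin 3),
    gen (β, a, c) * gen (β, b, d) - gen (β, a, d) * gen (β, b, c) = ε • gen (!β, r, s) := by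
  cases β
  · exact cg_minor a b c d
  · exact cg_minor_star a b c d

/-- monomials -/
noncomputable def mono (p q : ℕ) (i j : Fin p → Fin 3) (k l : Fin q → Fin 3) : C(SU 3, ℂ) :=
  (∏ s, gen (false, i s, j s)) * ∏ t, gen (true, k t, l t)

theorem exists_mono (m : Multiset (Bool × Fin 3 × Fin 3)) : ∃ p q i j k l, p + q = m.card ∧
    (m.map gen).prod = mono p q i j k l := by
  induction m using Multiset.induction with
  | empty => exact ⟨0, 0, Fin.elim0, Fin.elim0, Fin.elim0, Fin.elim0, by simp, by simp [mono]⟩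
  | cons a m ih =>
    obtain ⟨p, q, i, j, k, l, hc, h⟩ := ih
    obtain ⟨β, r, s⟩ := a
    cases β
    · refine ⟨p + 1, q, Fin.cons r i, Fin.cons s j, k, l, by simp; omega, ?_⟩
      simp [h, mono, Fin.prod_univ_succ, mul_assoc]
    · refine ⟨p, q + 1, i, j, Fin.cons r k, Fin.cons s l, by simp; omega, ?_⟩
      simp [h, mono, Fin.prod_univ_succ, mul_left_comm]

theorem swap_step {p : ℕ} (β : Bool) (i j : Fin p → Fin 3) (a b : Fin p) (hab : a ≠ b) :
    ∃ (ε : ℂ) (m : Multiset (Bool × Fin 3 × Fin 3)), m.card < p ∧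
    (∏ s, gen (β, i s, j (Equiv.swap a b s))) = (∏ s, gen (β, i s, j s)) + ε • (m.map gen).prod := by
  obtain ⟨ε, r, s, h⟩ := gen_minor β (i a) (i b) (j b) (j a)
  refine ⟨ε, (!β, r, s) ::ₘ ((Finset.univ.erase a).erase b).val.map (fun s => (β, i s, j s)), ?_, ?_⟩
  · have h1 : b ∈ Finset.univ.erase a := by simp [hab.symm]
    have := Finset.card_erase_of_mem h1
    have h2 := Finset.card_erase_of_mem (Finset.mem_univ a)
    have h3 : 0 < (Finset.univ.erase a).card := Finset.card_pos.2 ⟨b, h1⟩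
    simp only [Finset.card_univ, Fintype.card_fin] at h2
    simp only [Multiset.card_cons, Multiset.card_map, Finset.card_val]
    omega
  · have split : ∀ f : Fin p → C(SU 3, ℂ), ∏ s, f s = f a * (f b * ∏ s ∈ (Finset.univ.erase a).erase b, f s) := by
      intro f
      rw [Finset.mul_prod_erase _ _ (by simp [hab.symm]), Finset.mul_prod_erase _ _ (by simp)]
    have hr : ∏ s ∈ (Finset.univ.erase a).erase b, gen (β, i s, j (Equiv.swap a b s)) =
        ∏ s ∈ (Finset.univ.erase a).erase b, gen (β, i s, j s) := by
      refine Finset.prod_congr rfl fun s hs => ?_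
      simp only [Finset.mem_erase, Finset.mem_univ, and_true] at hs
      rw [Equiv.swap_apply_of_ne_of_ne hs.2 hs.1]
    rw [split, split (fun s => gen (β, i s, j s)), hr]
    simp only [Equiv.swap_apply_left, Equiv.swap_apply_right, Multiset.map_cons, Multiset.prod_cons,
      Multiset.map_map]
    rw [← smul_mul_assoc, ← h]
    simp only [Finset.prod, Function.comp_def]
    ring

theorem kill_mono (τ : C(SU 3, ℂ) →ₗ[ℂ] ℂ)
    (hτ : ∀ (p q : ℕ) (i : Fin p → Fin 3) (k : Fin q → Fin 3) (x : Fin 3 → ℂ),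
      τ ((∏ s, ∑ c, x c • gen (false, i s, c)) * ∏ t, ∑ c, star (x c) • gen (true, k t, c)) = 0) :
    ∀ (n : ℕ) (m : Multiset (Bool × Fin 3 × Fin 3)), m.card = n → τ (m.map gen).prod = 0 := by
  intro n
  induction n using Nat.strong_induction_on with
  | _ n IH =>
  intro m hm
  obtain ⟨p, q, i, j, k, l, hc, h⟩ := exists_mono m
  rw [h]
  rw [hm] at hc
  refine polar (fun j l => τ (mono p q i j k l)) ?_ ?_ ?_ j l
  · intro σ
    refine Equiv.Perm.swap_induction_on σ ?_ ?_
    · intro j l; rfl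
    · intro f a b hab ih j l
      have := ih (j ∘ Equiv.swap a b) l
      rw [Equiv.Perm.coe_mul, ← Function.comp_assoc]
      rw [this]
      obtain ⟨ε, m', hm', he⟩ := swap_step false i j a b hab
      have h0 := IH _ (show m'.card + q < n by omega)
        (m' + Finset.univ.val.map (fun t => (true, k t, l t))) (by simp)
      simp only [mono, Function.comp_apply, he, add_mul, map_add, smul_mul_assoc, map_smul]
      simp only [Multiset.map_add, Multiset.prod_add, Multiset.map_map] at h0
      have h1 : τ ((m'.map gen).prod * ∏ t, gen (true, k t, l t)) = 0 := h0
      rw [h1]; simp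
  · intro σ
    refine Equiv.Perm.swap_induction_on σ ?_ ?_
    · intro j l; rfl
    · intro f a b hab ih j l
      have := ih j (l ∘ Equiv.swap a b)
      rw [Equiv.Perm.coe_mul, ← Function.comp_assoc]
      rw [this]
      obtain ⟨ε, m', hm', he⟩ := swap_step true k l a b hab
      have h0 := IH _ (show p + m'.card < n by omega)
        (Finset.univ.val.map (fun t => (false, i t, j t)) + m') (by simp)
      simp only [mono, Function.comp_apply, he, mul_add, map_add, mul_smul_comm, map_smul]
      simp only [Multiset.map_add, Multiset.prod_add, Multiset.map_map] at h0
      have h1 : τ ((∏ t, gen (false, i t, j t)) * (m'.map gen).prod) = 0 := h0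
      rw [h1]; simp
  · intro x
    rw [← hτ p q i k x, Finset.prod_univ_sum, Finset.prod_univ_sum, Finset.sum_mul_sum, map_sum]
    simp only [Fintype.piFinset_univ, map_sum]
    refine Finset.sum_congr rfl fun j _ => Finset.sum_congr rfl fun l _ => ?_
    have e1 : ∀ (p : ℕ) (y : Fin p → ℂ) (f : Fin p → C(SU 3, ℂ)), ∏ s, y s • f s = (∏ s, y s) • ∏ s, f s := by
      intro p y f
      exact Finset.prod_smul ..
    rw [e1, e1, smul_mul_smul_comm, map_smul, smul_eq_mul]
    rfl

instance instClosedSU (n : ℕ) : IsTopologicalGroup (SU n) where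
  continuous_inv := by
    refine Continuous.subtype_mk ?_ _
    exact (continuous_subtype_val (p := fun x => x ∈ SU n)).star

instance instCompactSU (n : ℕ) : CompactSpace (SU n) := by
  refine isCompact_iff_compactSpace.1 (?_ : IsCompact ((SU n : Submonoid _) : Set (Matrix (Fin n) (Fin n) ℂ)))
  have hK : IsCompact (Set.univ.pi (fun _ => Set.univ.pi (fun _ => Metric.closedBall 0 1)) :
      Set (Fin n → Fin n → ℂ)) :=
    isCompact_univ_pi fun _ => isCompact_univ_pi fun _ => isCompact_closedBall 0 1
  refine IsCompact.of_isClosed_subset hK ?_ ?_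
  · have : ((SU n : Submonoid _) : Set (Matrix (Fin n) (Fin n) ℂ)) =
      {A | A * star A = 1} ∩ {A | A.det = 1} := by
      ext A
      simp [SU, Matrix.mem_specialUnitaryGroup_iff, Matrix.mem_unitaryGroup_iff]
    rw [this]
    refine IsClosed.inter (isClosed_eq ?_ continuous_const) (isClosed_eq ?_ continuous_const)
    · exact continuous_id.mul continuous_star
    · exact Continuous.matrix_det continuous_id
  · intro A hA i _ j _
    have := (Matrix.mem_specialUnitaryGroup_iff.1 hA).1
    simpa using entry_norm_bound_of_unitary this i j

theorem dense_kill (τ : C(SU 3, ℂ) →L[ℂ] ℂ)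
    (hτ : ∀ (m : Multiset (Bool × Fin 3 × Fin 3)), τ (m.map gen).prod = 0) (F : C(SU 3, ℂ)) : τ F = 0 := by
  let A : StarSubalgebra ℂ C(SU 3, ℂ) := StarAlgebra.adjoin ℂ (Set.range fun x : Fin 3 × Fin 3 => cg x.1 x.2)
  have hA : A.topologicalClosure = ⊤ := by
    apply ContinuousMap.starSubalgebra_topologicalClosure_eq_top_of_separatesPoints
    intro g h hgh
    have : ∃ i j, (g : Matrix (Fin 3) (Fin 3) ℂ) i j ≠ (h : Matrix (Fin 3) (Fin 3) ℂ) i j := by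
      by_contra! hc
      exact hgh (Subtype.ext (Matrix.ext hc))
    obtain ⟨i, j, hij⟩ := this
    exact ⟨cg i j, ⟨cg i j, StarAlgebra.subset_adjoin ℂ _ ⟨(i, j), rfl⟩, rfl⟩, hij⟩
  have hk : ∀ f ∈ A, τ f = 0 := by
    intro f hf
    have hf' : f ∈ Subalgebra.toSubmodule (Algebra.adjoin ℂ ((Set.range fun x : Fin 3 × Fin 3 => cg x.1 x.2) ∪
      star (Set.range fun x : Fin 3 × Fin 3 => cg x.1 x.2))) := hf
    rw [Algebra.adjoin_eq_span] at hf'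
    clear hf
    induction hf' using Submodule.span_induction with
    | mem f hf =>
      obtain ⟨L, hL, rfl⟩ := Submonoid.exists_list_of_mem_closure hf
      have : ∃ m : Multiset (Bool × Fin 3 × Fin 3), L.prod = (m.map gen).prod := by
        clear hf
        induction L with
        | nil => exact ⟨0, by simp⟩
        | cons y L ih =>
          obtain ⟨m, hm⟩ := ih (fun y hy => hL y (List.mem_cons_of_mem _ hy)) 
          have hy := hL y List.mem_cons_self
          rcases hy with ⟨x, hx⟩ | ⟨x, hx⟩
          · exact ⟨(false, x) ::ₘ m, by rw [List.prod_cons, hm, ← hx, Multiset.map_cons, Multiset.prod_cons]; rfl⟩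
          · refine ⟨(true, x) ::ₘ m, ?_⟩
            have : y = star (cg x.1 x.2) := by rw [← star_star y, ← hx]
            rw [List.prod_cons, hm, this, Multiset.map_cons, Multiset.prod_cons]; rfl
      obtain ⟨m, hm⟩ := this
      rw [hm, hτ]
    | zero => simp
    | add f g _ _ h1 h2 => rw [map_add, h1, h2, add_zero]
    | smul c f _ h => rw [map_smul, h, smul_zero]
  have hF : F ∈ A.topologicalClosure := by rw [hA]; trivial
  have hF' : F ∈ closure (A : Set C(SU 3, ℂ)) := hF
  have hcl : IsClosed {f : C(SU 3, ℂ) | τ f = 0} := isClosed_eq τ.continuous continuous_const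
  exact closure_minimal (fun f hf => hk f hf) hcl hF'

theorem su_trans (x : Fin 3 → ℂ) : ∃ (r : ℂ) (g : SU 3), ∀ i, x i = r * (g : Matrix (Fin 3) (Fin 3) ℂ) i 2 := by
  by_cases hx : x = 0
  · exact ⟨0, 1, by simp [hx]⟩
  let y : EuclideanSpace ℂ (Fin 3) := WithLp.toLp 2 x
  have hy : y ≠ 0 := by
    intro h
    apply hx
    funext i
    exact congrArg (fun z : EuclideanSpace ℂ (Fin 3) => z i) h
  have hny : (‖y‖ : ℂ) ≠ 0 := by simpa using hy
  let u : EuclideanSpace ℂ (Fin 3) := (‖y‖ : ℂ)⁻¹ • y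
  have hu : ‖u‖ = 1 := by
    simp only [u, norm_smul, norm_inv, Complex.norm_real, norm_norm]
    exact inv_mul_cancel₀ (norm_ne_zero_iff.2 hy)
  obtain ⟨b, hb⟩ := Orthonormal.exists_orthonormalBasis_extension_of_card_eq (𝕜 := ℂ)
    (E := EuclideanSpace ℂ (Fin 3)) (ι := Fin 3) (by simp) (v := fun _ => u) (s := {2}) (by
      constructor
      · intro i; exact hu
      · intro i j hij
        exact absurd (Subsingleton.elim i j) hij)
  have hb2 := hb 2 rfl
  let U := (EuclideanSpace.basisFun (Fin 3) ℂ).toBasis.toMatrix b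
  have hU : U ∈ Matrix.unitaryGroup (Fin 3) ℂ :=
    OrthonormalBasis.toMatrix_orthonormalBasis_mem_unitary _ _
  have hUe : ∀ i j, U i j = b j i := by
    intro i j
    simp [U, Module.Basis.toMatrix_apply]
  have hd : ‖U.det‖ = 1 := by
    have := Matrix.det_of_mem_unitary hU
    exact CStarRing.norm_of_mem_unitary this
  obtain ⟨ω, hω⟩ := IsAlgClosed.exists_pow_nat_eq (U.det)⁻¹ (show 0 < 3 by norm_num)
  have hωn : ‖ω‖ = 1 := by
    have : ‖ω‖ ^ 3 = 1 := by rw [← norm_pow, hω, norm_inv, hd, inv_one]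
    exact (pow_eq_one_iff_of_nonneg (norm_nonneg _) (by norm_num)).1 this
  have hω0 : ω ≠ 0 := by rw [← norm_ne_zero_iff, hωn]; norm_num
  have hd0 : U.det ≠ 0 := by rw [← norm_ne_zero_iff, hd]; norm_num
  refine ⟨‖y‖ * ω⁻¹, ⟨ω • U, ?_⟩, ?_⟩
  · rw [Matrix.mem_specialUnitaryGroup_iff, Matrix.mem_unitaryGroup_iff]
    constructor
    · rw [star_smul, smul_mul_smul_comm, Matrix.mem_unitaryGroup_iff.1 hU]
      have : ω * star ω = 1 := by
        have := Complex.mul_conj ω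
        rw [Complex.normSq_eq_norm_sq, hωn] at this
        simpa using this
      rw [this, one_smul]
    · rw [Matrix.det_smul, Fintype.card_fin, hω, inv_mul_cancel₀ hd0]
  · intro i
    simp only [Matrix.smul_apply, hUe, hb2, smul_eq_mul, u, PiLp.smul_apply]
    have : y i = x i := rfl
    rw [this]
    field_simp

theorem blockEmbed_mul (A B : Matrix (Fin 2) (Fin 2) ℂ) : blockEmbed (A * B) = blockEmbed A * blockEmbed B := by
  simp [blockEmbed, Matrix.fromBlocks_multiply, Matrix.submatrix_mul_equiv]

theorem blockEmbed_one : blockEmbed 1 = 1 := by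
  simp [blockEmbed]

theorem blockEmbed_star (A : Matrix (Fin 2) (Fin 2) ℂ) : blockEmbed (star A) = star (blockEmbed A) := by
  simp [blockEmbed, Matrix.star_eq_conjTranspose, Matrix.fromBlocks_conjTranspose]

theorem blockEmbed_det (A : Matrix (Fin 2) (Fin 2) ℂ) : (blockEmbed A).det = A.det := by
  rw [blockEmbed, Matrix.det_reindex_self]
  simp

theorem blockEmbed_col (A : Matrix (Fin 2) (Fin 2) ℂ) (i) : blockEmbed A i 2 = (1 : Matrix (Fin 3) (Fin 3) ℂ) i 2 := by
  have h2 : (finSumFinEquiv (m := 2) (n := 1)).symm 2 = Sum.inr 0 := by decide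
  have h0 : (finSumFinEquiv (m := 2) (n := 1)).symm 0 = Sum.inl 0 := by decide
  have h1 : (finSumFinEquiv (m := 2) (n := 1)).symm 1 = Sum.inl 1 := by decide
  fin_cases i <;> simp [blockEmbed, h0, h1, h2]
  exact (Matrix.one_apply_eq (2 : Fin 3)).symm

theorem blockEmbed_cont : Continuous blockEmbed := by
  unfold blockEmbed
  refine Continuous.matrix_reindex (Continuous.matrix_fromBlocks continuous_id continuous_const continuous_const continuous_const) _ _

/-- the embedding -/
noncomputable def iotaSU : SU 2 →* SU 3 where
  toFun A := ⟨blockEmbed A.1, by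
    have h := Matrix.mem_specialUnitaryGroup_iff.1 A.2
    rw [Matrix.mem_specialUnitaryGroup_iff, Matrix.mem_unitaryGroup_iff, ← blockEmbed_star,
      ← blockEmbed_mul, Matrix.mem_unitaryGroup_iff.1 h.1, blockEmbed_det, blockEmbed_one]
    exact ⟨rfl, h.2⟩⟩
  map_one' := Subtype.ext blockEmbed_one
  map_mul' A B := Subtype.ext (blockEmbed_mul A.1 B.1)

theorem iotaSU_cont : Continuous iotaSU :=
  Continuous.subtype_mk (blockEmbed_cont.comp continuous_subtype_val) _

noncomputable instance instMeasSU (n : ℕ) : MeasurableSpace (SU n) := borel _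
instance instBorelSU (n : ℕ) : BorelSpace (SU n) := ⟨rfl⟩

open MeasureTheory

/-- Haar measure -/
noncomputable def muSU (n : ℕ) : Measure (SU n) := Measure.haarMeasure ⊤

instance (n : ℕ) : (muSU n).IsHaarMeasure := by unfold muSU; infer_instance
instance (n : ℕ) : IsProbabilityMeasure (muSU n) := ⟨Measure.haarMeasure_self⟩

/-- The functional. -/
noncomputable def tauSU (c : C(SU 3, ℂ)) : C(SU 3, ℂ) →L[ℂ] ℂ :=
  LinearMap.mkContinuous
    { toFun := fun F => ∫ g, F g⁻¹ * c g⁻¹ ∂(muSU 3)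
      map_add' := by
        intro F F'
        simp only [ContinuousMap.add_apply, add_mul]
        apply integral_add
        · exact Continuous.integrable_of_hasCompactSupport (by fun_prop) (HasCompactSupport.of_compactSpace _)
        · exact Continuous.integrable_of_hasCompactSupport (by fun_prop) (HasCompactSupport.of_compactSpace _)
      map_smul' := by
        intro a F
        simp only [ContinuousMap.smul_apply, smul_mul_assoc, RingHom.id_apply]
        exact integral_smul _ _ } (‖c‖) (by
    intro F
    have := norm_integral_le_of_norm_le_const (μ := muSU 3) (f := fun g => F g⁻¹ * c g⁻¹) (C := ‖c‖ * ‖F‖)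
      (Filter.Eventually.of_forall fun g => by
        rw [norm_mul, mul_comm]
        exact mul_le_mul (c.norm_coe_le_norm _) (F.norm_coe_le_norm _) (norm_nonneg _) (norm_nonneg _))
    simpa using this)

theorem tauSU_apply (c F : C(SU 3, ℂ)) : tauSU c F = ∫ g, F g⁻¹ * c g⁻¹ ∂(muSU 3) := rfl

/-- **Branching claim in the proof of Lemma A.3 (Gelfand–Zetlin).**
Every continuous irreducible finite-dimensional complex representation `π` of `SU(3)` has a
nonzero vector fixed by `π(ι(A))` for every `A ∈ SU(2)`, where `ι : SU(2) → SU(3)` is the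
block-diagonal embedding `A ↦ diag(A, 1)`. -/
theorem exists_nonzero_su2_fixed_vector {V : Type*} [NormedAddCommGroup V]
    [NormedSpace ℂ V] [FiniteDimensional ℂ V]
    (π : Matrix.specialUnitaryGroup (Fin 3) ℂ →* (V ≃ₗ[ℂ] V))
    (hcont : ∀ v : V, Continuous fun g : Matrix.specialUnitaryGroup (Fin 3) ℂ => π g v)
    (hnontriv : Nontrivial V)
    (hirr : ∀ p : Submodule ℂ V,
      (∀ g : Matrix.specialUnitaryGroup (Fin 3) ℂ, ∀ v ∈ p, π g v ∈ p) → p = ⊥ ∨ p = ⊤) :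
    ∃ v : V, v ≠ 0 ∧ ∀ (A : Matrix.specialUnitaryGroup (Fin 2) ℂ)
      (g : Matrix.specialUnitaryGroup (Fin 3) ℂ),
      (g : Matrix (Fin 3) (Fin 3) ℂ) = blockEmbed (A : Matrix (Fin 2) (Fin 2) ℂ) →
      π g v = v := by
  by_contra hno
  have : CompleteSpace V := FiniteDimensional.complete ℂ V
  have hno' : ∀ v : V, (∀ A : SU 2, π (iotaSU A) v = v) → v = 0 := by
    intro v hv
    by_contra hv0
    refine hno ⟨v, hv0, fun A g hg => ?_⟩
    rw [show g = iotaSU A from Subtype.ext hg, hv]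
  have hP : ∀ v : V, ∫ A, π (iotaSU A) v ∂(muSU 2) = 0 := by
    intro v
    apply hno'
    intro B
    have e : ∀ w, π (iotaSU B) w = (LinearMap.toContinuousLinearMap (π (iotaSU B)).toLinearMap) w := fun _ => rfl
    rw [e, ← ContinuousLinearMap.integral_comp_comm]
    · have : ∀ A, (LinearMap.toContinuousLinearMap (π (iotaSU B)).toLinearMap) (π (iotaSU A) v) =
        π (iotaSU (B * A)) v := by
        intro A
        rw [← e, map_mul, map_mul]; rfl
      simp only [this]
      exact integral_mul_left_eq_self (fun A => π (iotaSU A) v) B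
    · exact Continuous.integrable_of_hasCompactSupport ((hcont v).comp iotaSU_cont) (HasCompactSupport.of_compactSpace _)
  have hfix : ∀ (φ : (Fin 3 → ℂ) → ℂ) (hφ : Continuous φ) (ℓ : V →L[ℂ] ℂ) (v : V),
      ∫ g : SU 3, φ (fun i => (g⁻¹).1 i 2) * ℓ (π g⁻¹ v) ∂(muSU 3) = 0 := by
    intro φ hφ ℓ v
    have hint : ∀ v, Integrable (fun g : SU 3 => φ (fun i => (g⁻¹).1 i 2) * ℓ (π g⁻¹ v)) (muSU 3) := by
      intro v
      refine Continuous.integrable_of_hasCompactSupport ?_ (HasCompactSupport.of_compactSpace _)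
      refine Continuous.mul (hφ.comp ?_) (ℓ.continuous.comp ((hcont v).comp continuous_inv))
      exact continuous_pi fun i => (cg i 2).continuous.comp continuous_inv
    let M : V →ₗ[ℂ] ℂ :=
      { toFun := fun v => ∫ g : SU 3, φ (fun i => (g⁻¹).1 i 2) * ℓ (π g⁻¹ v) ∂(muSU 3)
        map_add' := by
          intro v w
          simp only [map_add, mul_add]
          exact integral_add (hint v) (hint w)
        map_smul' := by
          intro a v
          simp only [map_smul, mul_smul_comm, RingHom.id_apply]
          exact integral_smul _ _ }
    have hM : ∀ A v, M (π (iotaSU A) v) = M v := by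
      intro A v
      have := integral_mul_left_eq_self (μ := muSU 3)
        (fun g : SU 3 => φ (fun i => (g⁻¹).1 i 2) * ℓ (π g⁻¹ v)) (iotaSU A)⁻¹
      refine Eq.trans ?_ this
      refine integral_congr_ae (Filter.Eventually.of_forall fun g => ?_)
      simp only [mul_inv_rev, inv_inv]
      have e1 : ∀ i, (g⁻¹ * iotaSU A).1 i 2 = (g⁻¹).1 i 2 := by
        intro i
        change ((g⁻¹).1 * blockEmbed A.1) i 2 = _
        simp only [Matrix.mul_apply, blockEmbed_col]
        rw [← Matrix.mul_apply, mul_one]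
      simp only [e1]
      rw [map_mul π g⁻¹]; rfl
    have h1 : ∫ A, M.toContinuousLinearMap (π (iotaSU A) v) ∂(muSU 2) = M v := by
      have : ∀ A, M.toContinuousLinearMap (π (iotaSU A) v) = M v := fun A => hM A v
      simp [this]
    rw [ContinuousLinearMap.integral_comp_comm, hP, map_zero] at h1
    · exact h1.symm
    · exact Continuous.integrable_of_hasCompactSupport ((hcont v).comp iotaSU_cont) (HasCompactSupport.of_compactSpace _)
  obtain ⟨v, hv⟩ := exists_ne (0 : V)
  obtain ⟨ℓ, hℓ⟩ := SeparatingDual.exists_ne_zero (R := ℂ) hv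
  let c : C(SU 3, ℂ) := ⟨fun g => ℓ (π g v), ℓ.continuous.comp (hcont v)⟩
  have hτ : ∀ F, tauSU c F = 0 := by
    apply dense_kill
    intro m
    refine kill_mono (tauSU c).toLinearMap ?_ _ m rfl
    intro p q i k x
    obtain ⟨r, g0, hx⟩ := su_trans x
    have hφ : Continuous (fun y : Fin 3 → ℂ => (∏ s, (r * y (i s))) * ∏ t, star (r * y (k t))) := by
      fun_prop
    have h0 := hfix _ hφ ℓ (π g0⁻¹ v)
    rw [← integral_mul_left_eq_self (μ := muSU 3) _ g0⁻¹] at h0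
    rw [← h0]
    refine (tauSU_apply c _).trans (integral_congr_ae (Filter.Eventually.of_forall fun g => ?_))
    simp only [mul_inv_rev, inv_inv]
    have e2 : π (g⁻¹ * g0) (π g0⁻¹ v) = π g⁻¹ v := by
      have := congrArg (fun f => f v) (map_mul π (g⁻¹ * g0) g0⁻¹)
      rw [mul_inv_cancel_right] at this
      exact this.symm
    rw [e2]
    have e3 : ∀ i, ∑ c, x c * (g⁻¹).1 i c = r * (g⁻¹ * g0).1 i 2 := by
      intro i
      change _ = r * ((g⁻¹).1 * g0.1) i 2
      rw [Matrix.mul_apply, Finset.mul_sum]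
      refine Finset.sum_congr rfl fun c _ => ?_
      rw [hx]; ring
    simp only [← e3, ContinuousMap.mul_apply, ContinuousMap.prod_apply, ContinuousMap.sum_apply,
      ContinuousMap.smul_apply, gen_false, gen_true, star_sum, star_mul', smul_eq_mul]
    rfl
  have h2 := hτ (star c)
  rw [tauSU_apply] at h2
  have h3 : ∀ g : SU 3, (star c) g⁻¹ * c g⁻¹ = ((‖c g⁻¹‖ ^ 2 : ℝ) : ℂ) := by
    intro g
    have : (star c) g⁻¹ = star (c g⁻¹) := rfl
    rw [this]
    have := Complex.conj_mul' (c g⁻¹)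
    push_cast
    exact this
  simp only [h3] at h2
  have h4 : ∫ g : SU 3, ‖c g⁻¹‖ ^ 2 ∂(muSU 3) = 0 := by
    rw [integral_complex_ofReal] at h2
    exact_mod_cast h2
  have hcc : Continuous fun g : SU 3 => ‖c g⁻¹‖ ^ 2 := by fun_prop
  have h5 : 0 < ∫ g : SU 3, ‖c g⁻¹‖ ^ 2 ∂(muSU 3) := by
    refine hcc.integral_pos_of_hasCompactSupport_nonneg_nonzero (HasCompactSupport.of_compactSpace _)
      (fun g => by positivity) (x := 1) ?_
    simp only [inv_one, ne_eq, c, ContinuousMap.coe_mk, map_one]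
    have : (1 : V ≃ₗ[ℂ] V) v = v := rfl
    rw [this]
    positivity
  exact h5.ne' h4
end
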